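/- For all k,v ∈ ℕ with v ≤ k, Σ_{h≥0} D_{k,v,h} = (k!/v!) · Σ_{j=0}^{k−v} (−1)^{k−v−j} (2j−1)!! / (j! · (k−v−j)!). (Equivalently, the exponential generating function Σ_{k,v} (Σ_h D_{k,v,h}) w^v y^k/k! equals e^{y(w−1)}/√(1−2y).) -/

import Mathlib

/-!
Write `n(P)` for the number of vertical dominoes of a configuration `P`. Summing `D k v h` over `h`
counts the configurations with `n(P) = v`, so it suffices to compute the polynomial
`∑_P X ^ n(P)` and read off its coefficient at `v`.

Expanding `X ^ n(P) = ((X - 1) + 1) ^ n(P)` over the sets `J` of columns carrying a vertical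
domino of `P`, and exchanging the sums, gives
`∑_J (X - 1) ^ |J| * #{P : every column of J is a domino of P}`.
Deleting the prescribed dominoes (`card_pairings_superset`) identifies the configurations counted
for `J` with the pairings of the remaining `2 (k - |J|)` cells, of which there are
`(2 (k - |J|) - 1)!!` (`card_pairings`, by choosing the partner of one fixed cell and induction). Hence
`∑_P X ^ n(P) = ∑_m (k choose m) (2 (k - m) - 1)!! (X - 1) ^ m` (`vertical_polynomial`), and
the binomial theorem finishes the computation.
-/

/-- A cell of the `2 × k` array. -/
abbrev Cell (k : ℕ) := Fin 2 × Fin k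

/-- `P` is a partition of the cells of the `2 × k` array into (unordered) pairs,
i.e., a configuration of the `2 × k` game of memory (with indistinguishable pairs). -/
def IsPairPartition {k : ℕ} (P : Finset (Finset (Cell k))) : Prop :=
  (∀ p ∈ P, p.card = 2) ∧ (∀ p ∈ P, ∀ q ∈ P, p ≠ q → p ∩ q = ∅) ∧
    (∀ x : Cell k, ∃ p ∈ P, x ∈ p)

/-- `p` is a vertical cell-pair (vertical domino position). -/
def IsVert {k : ℕ} (p : Finset (Cell k)) : Prop :=
  ∃ j : Fin k, p = {((0 : Fin 2), j), ((1 : Fin 2), j)}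

/-- `p` is a horizontal cell-pair (horizontal domino position). -/
def IsHoriz {k : ℕ} (p : Finset (Cell k)) : Prop :=
  ∃ (i : Fin 2) (j j' : Fin k), (j' : ℕ) = (j : ℕ) + 1 ∧ p = {(i, j), (i, j')}

/-- An edge of the `2 × k` grid graph (two cells agreeing in one coordinate and
differing by exactly 1 in the other) is exactly a vertical or horizontal cell-pair. -/
def IsGridEdge {k : ℕ} (e : Finset (Cell k)) : Prop := IsVert e ∨ IsHoriz e

open scoped Classical in
/-- `D k v h`: the number of configurations of the `2 × k` game of memory having
exactly `v` vertical and exactly `h` horizontal dominoes. -/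
noncomputable def D (k v h : ℕ) : ℕ :=
  (Finset.univ.filter fun P : Finset (Finset (Cell k)) =>
    IsPairPartition P ∧ (P.filter fun p => IsVert p).card = v ∧
      (P.filter fun p => IsHoriz p).card = h).card

open scoped Classical in
/-- `rho j k v h`: the sum, over all choices of a set `V` of `v` vertical cell-pairs
and a set `H` of `h` horizontal cell-pairs such that the chosen pairs are pairwise
disjoint, of the number of `j`-edge matchings of the subgraph of the `2 × k` grid
graph induced on the cells not belonging to any chosen pair.
(Counted as triples `(V, H, M)`.) -/
noncomputable def rho (j k v h : ℕ) : ℕ :=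
  (Finset.univ.filter fun T :
      Finset (Finset (Cell k)) × Finset (Finset (Cell k)) × Finset (Finset (Cell k)) =>
    (∀ p ∈ T.1, IsVert p) ∧ T.1.card = v ∧
    (∀ p ∈ T.2.1, IsHoriz p) ∧ T.2.1.card = h ∧
    (∀ p ∈ T.1 ∪ T.2.1, ∀ q ∈ T.1 ∪ T.2.1, p ≠ q → p ∩ q = ∅) ∧
    (∀ e ∈ T.2.2, IsGridEdge e) ∧ T.2.2.card = j ∧
    (∀ e ∈ T.2.2, ∀ f ∈ T.2.2, e ≠ f → e ∩ f = ∅) ∧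
    (∀ e ∈ T.2.2, ∀ p ∈ T.1 ∪ T.2.1, e ∩ p = ∅)).card

/-- `df n` is the double factorial `(2n-1)!! = (2n)! / (2^n n!)`, with
`df 0 = (-1)!! = 1`. -/
def df (n : ℕ) : ℕ := (2 * n).factorial / (2 ^ n * n.factorial)

open Finset

/-! ### Pairings of a finite set -/

/-- `P` is a partition of the finite set `S` into two-element blocks. -/
def IsPairing {α : Type*} [DecidableEq α] (S : Finset α) (P : Finset (Finset α)) : Prop :=
  (∀ p ∈ P, p.card = 2) ∧ (∀ p ∈ P, ∀ q ∈ P, p ≠ q → p ∩ q = ∅) ∧ P.biUnion id = S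

open scoped Classical in
/-- The set of all pairings of `S`. -/
noncomputable def pairings {α : Type*} [Fintype α] [DecidableEq α] (S : Finset α) :
    Finset (Finset (Finset α)) :=
  univ.filter fun P => IsPairing S P

lemma mem_pairings {α : Type*} [Fintype α] [DecidableEq α] {S : Finset α}
    {P : Finset (Finset α)} : P ∈ pairings S ↔ IsPairing S P := by
  simp [pairings]

/-- Two blocks of a pairing that share a point coincide. -/
lemma IsPairing.eq_of_mem {α : Type*} [DecidableEq α] {S : Finset α} {P : Finset (Finset α)}
    (h : IsPairing S P) {p q : Finset α} (hp : p ∈ P) (hq : q ∈ P) {x : α} (hxp : x ∈ p)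
    (hxq : x ∈ q) : p = q := by
  by_contra hne
  have := h.2.1 p hp q hq hne
  exact notMem_empty x (this ▸ mem_inter.2 ⟨hxp, hxq⟩)

/-- Pairings of `S` containing prescribed disjoint pairs `Q` correspond, by deleting `Q`, to
pairings of the points of `S` not covered by `Q`. -/
lemma card_pairings_superset {α : Type*} [Fintype α] [DecidableEq α] (S : Finset α)
    (Q : Finset (Finset α)) (hcard : ∀ p ∈ Q, p.card = 2)
    (hdisj : ∀ p ∈ Q, ∀ q ∈ Q, p ≠ q → p ∩ q = ∅) (hsub : Q.biUnion id ⊆ S) :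
    ((pairings S).filter fun P => Q ⊆ P).card = (pairings (S \ Q.biUnion id)).card := by
  refine card_bij' (fun P _ => P \ Q) (fun R _ => R ∪ Q) ?_ ?_ ?_ ?_
  · intro P hP
    rw [mem_filter, mem_pairings] at hP
    obtain ⟨hP, hQP⟩ := hP
    rw [mem_pairings]
    refine ⟨fun p hp => hP.1 p (mem_sdiff.1 hp).1,
      fun p hp q hq => hP.2.1 p (mem_sdiff.1 hp).1 q (mem_sdiff.1 hq).1, ?_⟩
    ext x
    simp only [mem_biUnion, mem_sdiff, id, ← hP.2.2]
    constructor
    · rintro ⟨p, ⟨hp, hpQ⟩, hx⟩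
      refine ⟨⟨p, hp, hx⟩, ?_⟩
      rintro ⟨q, hq, hxq⟩
      exact hpQ (hP.eq_of_mem hp (hQP hq) hx hxq ▸ hq)
    · rintro ⟨⟨p, hp, hx⟩, hn⟩
      exact ⟨p, ⟨hp, fun hpQ => hn ⟨p, hpQ, hx⟩⟩, hx⟩
  · intro R hR
    rw [mem_pairings] at hR
    have key : ∀ p ∈ R, ∀ q ∈ Q, p ∩ q = ∅ := by
      intro p hp q hq
      ext x
      simp only [mem_inter, notMem_empty, iff_false, not_and]
      intro hxp hxq
      have : x ∈ S \ Q.biUnion id := hR.2.2 ▸ mem_biUnion.2 ⟨p, hp, hxp⟩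
      exact (mem_sdiff.1 this).2 (mem_biUnion.2 ⟨q, hq, hxq⟩)
    rw [mem_filter, mem_pairings]
    refine ⟨⟨?_, ?_, ?_⟩, subset_union_right⟩
    · intro p hp
      rcases mem_union.1 hp with h | h
      exacts [hR.1 p h, hcard p h]
    · intro p hp q hq hne
      rcases mem_union.1 hp with h | h <;> rcases mem_union.1 hq with h' | h'
      · exact hR.2.1 p h q h' hne
      · exact key p h q h'
      · rw [inter_comm]; exact key q h' p h
      · exact hdisj p h q h' hne
    · rw [union_biUnion, hR.2.2, sdiff_union_of_subset hsub]
  · intro P hP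
    exact sdiff_union_of_subset (mem_filter.1 hP).2
  · intro R hR
    rw [mem_pairings] at hR
    apply union_sdiff_cancel_right
    rw [disjoint_left]
    intro p hp hpQ
    -- A block of both `R` and `Q` would have a point, which `R` does not cover.
    obtain ⟨x, hx⟩ : p.Nonempty := card_pos.1 (by rw [hR.1 p hp]; norm_num)
    have : x ∈ S \ Q.biUnion id := hR.2.2 ▸ mem_biUnion.2 ⟨p, hp, hx⟩
    exact (mem_sdiff.1 this).2 (mem_biUnion.2 ⟨p, hpQ, hx⟩)

lemma df_succ (n : ℕ) : df (n + 1) = (2 * n + 1) * df n := by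
  have key : ∀ n, df n = ∏ i ∈ range n, (2 * i + 1) := by
    intro n
    unfold df
    refine Nat.div_eq_of_eq_mul_left (by positivity) ?_
    induction n with
    | zero => simp
    | succ n ih =>
      rw [show 2 * (n + 1) = 2 * n + 1 + 1 by ring, Nat.factorial_succ, Nat.factorial_succ, ih,
        prod_range_succ, Nat.factorial_succ]
      ring
  rw [key, key, prod_range_succ, mul_comm]

/-- A set of `2 n` points has `(2 n - 1)!!` pairings: fix a point, choose one of its `2 n - 1`
possible partners, and pair the rest. -/
lemma card_pairings {α : Type*} [Fintype α] [DecidableEq α] (n : ℕ) :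
    ∀ S : Finset α, S.card = 2 * n → (pairings S).card = df n := by
  induction n with
  | zero =>
    intro S hS
    obtain rfl : S = ∅ := card_eq_zero.1 (by simpa using hS)
    have : pairings (∅ : Finset α) = {∅} := by
      ext P
      rw [mem_pairings, mem_singleton]
      constructor
      · intro h
        rw [eq_empty_iff_forall_notMem]
        intro p hp
        obtain ⟨x, hx⟩ : p.Nonempty := card_pos.1 (by rw [h.1 p hp]; norm_num)
        exact notMem_empty x (h.2.2 ▸ mem_biUnion.2 ⟨p, hp, hx⟩)
      · rintro rfl
        simp [IsPairing]
    rw [this]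
    simp [df]
  | succ n ih =>
    intro S hS
    obtain ⟨x, hx⟩ : S.Nonempty := card_pos.1 (by omega)
    have hunion : pairings S =
        (S.erase x).biUnion fun y => (pairings S).filter fun P => {{x, y}} ⊆ P := by
      ext P
      simp only [mem_biUnion, mem_filter, singleton_subset_iff]
      constructor
      · intro hP
        have h := mem_pairings.1 hP
        obtain ⟨p, hp, hxp⟩ := mem_biUnion.1 (h.2.2.symm ▸ hx : x ∈ P.biUnion id)
        rw [id] at hxp
        obtain ⟨y, hy⟩ := card_eq_one.1
          (by rw [card_erase_of_mem hxp, h.1 p hp] : (p.erase x).card = 1)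
        have hpe : p = {x, y} := by rw [← insert_erase hxp, hy]
        have hyp : y ∈ p.erase x := by simp [hy]
        refine ⟨y, mem_erase.2 ⟨(mem_erase.1 hyp).1, ?_⟩, hP, hpe ▸ hp⟩
        rw [← h.2.2]
        exact mem_biUnion.2 ⟨p, hp, (mem_erase.1 hyp).2⟩
      · rintro ⟨y, -, hP, -⟩
        exact hP
    rw [hunion, card_biUnion]
    · rw [sum_congr rfl (g := fun _ => df n), sum_const, card_erase_of_mem hx, hS, df_succ]
      · rw [smul_eq_mul, show 2 * (n + 1) - 1 = 2 * n + 1 by omega]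
      · intro y hy
        obtain ⟨hyx, hyS⟩ := mem_erase.1 hy
        have hpS : ({x, y} : Finset α) ⊆ S := by
          intro z hz
          rcases mem_insert.1 hz with rfl | hz
          · exact hx
          · rwa [mem_singleton.1 hz]
        have hc : ({x, y} : Finset α).card = 2 := card_pair hyx.symm
        rw [card_pairings_superset S {{x, y}} (by simpa using hc) (by simp +contextual)
          (by simpa using hpS)]
        apply ih
        rw [singleton_biUnion, id, card_sdiff_of_subset hpS, hc, hS]
        omega
    · intro y hy z hz hyz
      rw [Function.onFun, disjoint_left]
      intro P hP hP'
      simp only [mem_filter, singleton_subset_iff] at hP hP'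
      have := (mem_pairings.1 hP.1).eq_of_mem hP.2 hP'.2 (x := x) (by simp) (by simp)
      have hmem : y ∈ ({x, z} : Finset α) := this ▸ by simp
      have hyx : y ≠ x := (mem_erase.1 hy).1
      simp [hyx, hyz] at hmem

/-! ### Vertical dominoes -/

/-- The vertical cell-pair in column `j`. -/
def vert {k : ℕ} (j : Fin k) : Finset (Cell k) := {((0 : Fin 2), j), ((1 : Fin 2), j)}

lemma mem_vert {k : ℕ} {j : Fin k} {x : Cell k} : x ∈ vert j ↔ x.2 = j := by
  obtain ⟨i, l⟩ := x
  fin_cases i <;> simp [vert]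

lemma card_vert {k : ℕ} (j : Fin k) : (vert j).card = 2 := by
  simp [vert]

lemma vert_injective {k : ℕ} : Function.Injective (vert (k := k)) := by
  intro i j h
  have : ((0 : Fin 2), i) ∈ vert j := h ▸ mem_vert.2 rfl
  exact mem_vert.1 this

lemma isPairPartition_iff {k : ℕ} (P : Finset (Finset (Cell k))) :
    IsPairPartition P ↔ P ∈ pairings (univ : Finset (Cell k)) := by
  rw [mem_pairings, IsPairPartition, IsPairing, eq_univ_iff_forall]
  simp only [mem_biUnion, id]

open scoped Classical in
/-- The number of vertical dominoes of `P`. -/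
noncomputable def numVert {k : ℕ} (P : Finset (Finset (Cell k))) : ℕ :=
  (P.filter fun p => IsVert p).card

lemma numVert_eq {k : ℕ} (P : Finset (Finset (Cell k))) :
    numVert P = (univ.filter fun j : Fin k => vert j ∈ P).card := by
  classical
  rw [← card_image_of_injective _ vert_injective, numVert]
  congr 1
  ext p
  simp only [mem_filter, mem_image, mem_univ, true_and]
  constructor
  · rintro ⟨hp, j, rfl⟩
    exact ⟨j, hp, rfl⟩
  · rintro ⟨j, hj, rfl⟩
    exact ⟨hj, j, rfl⟩

/-- The configurations having a vertical domino in every column of `J` are the pairings of the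
other columns. -/
lemma card_pairings_columns {k : ℕ} (J : Finset (Fin k)) :
    ((pairings (univ : Finset (Cell k))).filter fun P => ∀ j ∈ J, vert j ∈ P).card =
      df (k - J.card) := by
  have hdisj : ∀ i j : Fin k, i ≠ j → vert i ∩ vert j = ∅ := by
    intro i j hij
    ext x
    simp only [mem_inter, mem_vert, notMem_empty, iff_false, not_and]
    rintro rfl
    exact hij
  have h := card_pairings_superset (univ : Finset (Cell k)) (J.image vert)
    (by simp [card_vert])
    (by
      simp only [mem_image]
      rintro _ ⟨i, -, rfl⟩ _ ⟨j, -, rfl⟩ hne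
      exact hdisj i j fun e => hne (e ▸ rfl))
    (subset_univ _)
  simp only [image_subset_iff] at h
  rw [h]
  apply card_pairings
  have hU : (J.image vert).biUnion id = (univ : Finset (Fin 2)) ×ˢ J := by
    ext x
    simp [mem_vert]
  rw [hU, card_sdiff_of_subset (subset_univ _), card_product]
  simp only [card_univ, Fintype.card_prod, Fintype.card_fin]
  omega

open Polynomial in
/-- The distribution of the number of vertical dominoes, expanded in powers of `X - 1`. -/
lemma vertical_polynomial (k : ℕ) :
    ∑ P ∈ pairings (univ : Finset (Cell k)), (X : ℚ[X]) ^ numVert P =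
      ∑ m ∈ range (k + 1), ((k.choose m * df (k - m) : ℕ) : ℚ[X]) * (X + C (-1)) ^ m := by
  classical
  have h1 : ∀ P : Finset (Finset (Cell k)), (X : ℚ[X]) ^ numVert P =
      ∑ J : Finset (Fin k), if ∀ j ∈ J, vert j ∈ P then (X + C (-1) : ℚ[X]) ^ J.card else 0 := by
    intro P
    have h := sum_pow_mul_eq_add_pow (X + C (-1) : ℚ[X]) 1
      (univ.filter fun j : Fin k => vert j ∈ P)
    rw [← numVert_eq] at h
    have hX : (X + C (-1) : ℚ[X]) + 1 = X := by simp
    rw [hX] at h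
    rw [← h, ← sum_filter]
    refine sum_congr ?_ (by simp)
    ext J
    simp [subset_iff]
  have h2 : ∀ J : Finset (Fin k), (∑ P ∈ pairings (univ : Finset (Cell k)),
      if ∀ j ∈ J, vert j ∈ P then (X + C (-1) : ℚ[X]) ^ J.card else 0) =
        (df (k - J.card) : ℚ[X]) * (X + C (-1)) ^ J.card := by
    intro J
    rw [← sum_filter, sum_const, card_pairings_columns, nsmul_eq_mul]
  rw [sum_congr rfl fun P _ => h1 P, sum_comm, sum_congr rfl fun J _ => h2 J, ← powerset_univ,
    sum_powerset_apply_card fun m => (df (k - m) : ℚ[X]) * (X + C (-1)) ^ m]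
  simp [nsmul_eq_mul, mul_assoc]

open Polynomial in
lemma card_numVert_eq (k v : ℕ) :
    (((pairings (univ : Finset (Cell k))).filter fun P => numVert P = v).card : ℚ) =
      ∑ m ∈ range (k + 1), (k.choose m * df (k - m) : ℚ) * ((-1) ^ (m - v) * m.choose v) := by
  have h := congrArg (fun p : ℚ[X] => p.coeff v) (vertical_polynomial k)
  simp only [finsetSum_coeff, coeff_X_pow, coeff_natCast_mul, coeff_X_add_C_pow] at h
  rw [sum_boole] at h
  simp only [eq_comm (a := v)] at h
  rw [h]
  push_cast
  rfl

lemma finsum_D (k v : ℕ) : (∑ᶠ h : ℕ, (D k v h : ℚ)) =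
    ((pairings (univ : Finset (Cell k))).filter fun P => numVert P = v).card := by
  classical
  -- `B` bounds the number of blocks, hence the number of horizontal dominoes.
  set B := Fintype.card (Finset (Cell k)) with hB
  have hle : ∀ P : Finset (Finset (Cell k)), (P.filter fun p => IsHoriz p).card ≤ B :=
    fun P => card_le_univ _
  have hD : ∀ h, D k v h = (((pairings (univ : Finset (Cell k))).filter
      fun P => numVert P = v).filter fun P => (P.filter fun p => IsHoriz p).card = h).card := by
    intro h
    unfold D
    congr 1
    ext P
    simp only [mem_filter, mem_univ, true_and, isPairPartition_iff, and_assoc]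
    rfl
  rw [finsum_eq_sum_of_support_subset (s := range (B + 1))]
  · rw [card_eq_sum_card_fiberwise (f := fun P => (P.filter fun p => IsHoriz p).card)
      (t := range (B + 1))]
    · push_cast
      exact sum_congr rfl fun h _ => by rw [hD]
    · intro P _
      simpa [Nat.lt_succ_iff] using hle P
  · intro h hh
    rw [Function.mem_support, Nat.cast_ne_zero, hD, card_ne_zero] at hh
    obtain ⟨P, hP⟩ := hh
    rw [mem_coe, mem_range, ← (mem_filter.1 hP).2]
    exact Nat.lt_succ_of_le (hle P)

/-- For `v ≤ k`,
`Σ_{h≥0} D_{k,v,h} = (k!/v!) Σ_{j=0}^{k-v} (-1)^{k-v-j} (2j-1)!! / (j! (k-v-j)!)`. -/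
theorem vertical_domino_count (k v : ℕ) (hv : v ≤ k) :
    (∑ᶠ h : ℕ, (D k v h : ℚ)) =
      ((k.factorial : ℚ) / (v.factorial : ℚ)) *
        ∑ j ∈ Finset.range (k - v + 1),
          (-1) ^ (k - v - j) * (df j : ℚ) /
            ((j.factorial : ℚ) * ((k - v - j).factorial : ℚ)) := by
  rw [finsum_D, card_numVert_eq, ← sum_range_reflect, mul_sum]
  -- The index `j = k - m` runs up to `k`; the terms with `j > k - v` contain `m.choose v = 0`.
  symm
  apply sum_subset_zero_on_sdiff (range_subset_range.2 (by omega))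
  · intro j hj
    simp only [mem_sdiff, mem_range] at hj
    rw [Nat.choose_eq_zero_of_lt (show k + 1 - 1 - j < v by omega)]
    simp
  · intro j hj
    rw [mem_range] at hj
    obtain ⟨l, rfl⟩ : ∃ l, k = v + l + j := ⟨k - v - j, by omega⟩
    have e1 : v + l + j - v - j = l := by omega
    have e2 : v + l + j + 1 - 1 - j = v + l := by omega
    have e3 : v + l + j - (v + l) = j := by omega
    have e4 : v + l - v = l := by omega
    rw [e1, e2, e3, e4, Nat.cast_add_choose, Nat.cast_add_choose]
    have := Nat.factorial_ne_zero (v + l)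
    field_simp
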